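/- Let N ≥ 2 be a natural number and ρ > 0. Let x and w be two points of X_{2N} with ‖x‖ ≤ ρ and ‖w‖ ≤ ρ, and suppose that ‖Q(w − Px)‖ ≥ ‖Q(w − x)‖. Then ‖η₂(x) − η₂(w)‖ ≥ C₁₂(ρ)·‖x − w‖², where C₁₂(ρ) = (1/80)·min{ 4 , 5/(3ρ) , 1/(ρ^{2N−2}·N) }. -/

import Mathlib

open Complex

noncomputable section

/-- The point `(a, b, c)` of `ℂ³` with the Euclidean (Hermitian) norm. -/
def mk3 (a b c : ℂ) : EuclideanSpace ℂ (Fin 3) :=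
  (WithLp.equiv 2 (Fin 3 → ℂ)).symm ![a, b, c]

/-- `η₂(x₁, x₂, x₃) = ((x₁+x₂)/2, x₃(x₁−x₂)/(2i), x₃²)`. -/
def eta2 (x : EuclideanSpace ℂ (Fin 3)) : EuclideanSpace ℂ (Fin 3) :=
  mk3 ((x 0 + x 1) / 2) (x 2 * (x 0 - x 1) / (2 * Complex.I)) (x 2 ^ 2)

/-- `P(x₁, x₂, x₃) = (x₂, x₁, −x₃)`. -/
def Pmap (x : EuclideanSpace ℂ (Fin 3)) : EuclideanSpace ℂ (Fin 3) :=
  mk3 (x 1) (x 0) (-(x 2))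

/-- `Q(x₁, x₂, x₃) = ((x₁+x₂)/2, (−ix₁+ix₂)/2, x₃)`. -/
def Qmap (x : EuclideanSpace ℂ (Fin 3)) : EuclideanSpace ℂ (Fin 3) :=
  mk3 ((x 0 + x 1) / 2) ((-Complex.I * x 0 + Complex.I * x 1) / 2) (x 2)


lemma aux_ineq (a b s t : ℂ) (c E : ℝ) (hc : 0 < c) (hE : 0 ≤ E)
    (h1 : c * ‖a * s‖ ≤ 5 * E) (h2 : c * ‖b * t‖ ≤ 4 * E) (h3 : c * ‖a * t + b * s‖ ≤ 8 * E)
    (h : ‖a‖ ^ 2 + ‖b‖ ^ 2 ≤ ‖s‖ ^ 2 + ‖t‖ ^ 2) :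
    c * (‖a‖ ^ 2 + ‖b‖ ^ 2) ≤ 13 * E := by
  have hp := parallelogram_law_with_norm ℂ (a * t) (b * s)
  have hm : ‖a * t - b * s‖ ^ 2 ≤ ‖a * t + b * s‖ ^ 2 + 4 * (‖a * s‖ * ‖b * t‖) := by
    have e : (a * t - b * s) ^ 2 = (a * t + b * s) ^ 2 - 4 * ((a * s) * (b * t)) := by ring
    have := norm_sub_le ((a * t + b * s) ^ 2) (4 * ((a * s) * (b * t)))
    rw [← e, norm_pow, norm_pow, norm_mul 4, norm_mul (a * s)] at this
    simpa using this
  have k1 : (c * ‖a * s‖) ^ 2 ≤ (5 * E) ^ 2 := by gcongr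
  have k2 : (c * ‖b * t‖) ^ 2 ≤ (4 * E) ^ 2 := by gcongr
  have k3 : (c * ‖a * t + b * s‖) ^ 2 ≤ (8 * E) ^ 2 := by gcongr
  have k4 : (c * ‖a * s‖) * (c * ‖b * t‖) ≤ (5 * E) * (4 * E) := by gcongr
  have k5 := mul_le_mul_of_nonneg_left hm (sq_nonneg c)
  have k6 : c ^ 2 * (‖a * t‖ ^ 2 + ‖b * s‖ ^ 2) ≤ 104 * E ^ 2 := by nlinarith
  have k7 : (‖a‖ ^ 2 + ‖b‖ ^ 2) ^ 2 ≤
      ‖a * s‖ ^ 2 + ‖b * t‖ ^ 2 + (‖a * t‖ ^ 2 + ‖b * s‖ ^ 2) := by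
    simp only [norm_mul]
    have := mul_le_mul_of_nonneg_left h (by positivity : 0 ≤ ‖a‖ ^ 2 + ‖b‖ ^ 2)
    nlinarith
  have k8 := mul_le_mul_of_nonneg_left k7 (sq_nonneg c)
  apply le_of_sq_le_sq _ (by positivity)
  nlinarith [sq_nonneg E]

lemma pow_diff (N : ℕ) (ρ : ℝ) (p q : ℂ) (hp : ‖p‖ ≤ ρ) (hq : ‖q‖ ≤ ρ) :
    ‖p ^ (2 * N) - q ^ (2 * N)‖ ≤ ρ ^ (2 * N - 2) * N * ‖p ^ 2 - q ^ 2‖ := by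
  rw [pow_mul, pow_mul, ← (Commute.all (p ^ 2) (q ^ 2)).geom_sum₂_mul N, norm_mul]
  gcongr
  refine (norm_sum_le_of_le (Finset.range N) (f := _) (n := fun _ => ρ ^ (2 * N - 2)) ?_).trans ?_
  · intro i hi
    have hi := Finset.mem_range.1 hi
    have hr : 0 ≤ ρ := (norm_nonneg p).trans hp
    rw [norm_mul, ← pow_mul, ← pow_mul, norm_pow, norm_pow]
    have : 2 * N - 2 = 2 * i + 2 * (N - 1 - i) := by omega
    rw [this, pow_add]
    gcongr
  · simp [mul_comm]

lemma comp_le (x : EuclideanSpace ℂ (Fin 3)) (i : Fin 3) : ‖x i‖ ≤ ‖x‖ :=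
  PiLp.norm_apply_le x i

/-- If `x, w ∈ X_{2N}` with `‖x‖ ≤ ρ`, `‖w‖ ≤ ρ` and `‖Q(w − Px)‖ ≥ ‖Q(w − x)‖`, then
`‖η₂(x) − η₂(w)‖ ≥ C₁₂(ρ)·‖x − w‖²`, where
`C₁₂(ρ) = (1/80)·min{4, 5/(3ρ), 1/(ρ^{2N−2}·N)}`. -/
theorem stmt14 (N : ℕ) (hN : 2 ≤ N) (ρ : ℝ) (hρ : 0 < ρ)
    (x w : EuclideanSpace ℂ (Fin 3))
    (hx : x 0 * x 1 = x 2 ^ (2 * N)) (hw : w 0 * w 1 = w 2 ^ (2 * N))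
    (hxρ : ‖x‖ ≤ ρ) (hwρ : ‖w‖ ≤ ρ)
    (hQ : ‖Qmap (w - Pmap x)‖ ≥ ‖Qmap (w - x)‖) :
    ‖eta2 x - eta2 w‖ ≥
      1 / 80 * min (min 4 (5 / (3 * ρ))) (1 / (ρ ^ (2 * N - 2) * N)) * ‖x - w‖ ^ 2 := by
  set E := ‖eta2 x - eta2 w‖ with hEdef
  set c := min (min 4 (5 / (3 * ρ))) (1 / (ρ ^ (2 * N - 2) * N)) with hcdef
  have hNpos : (0 : ℝ) < N := by exact_mod_cast (by omega : 0 < N)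
  have hR : 0 < ρ ^ (2 * N - 2) * N := by positivity
  have hc : 0 < c := by
    rw [hcdef]
    exact lt_min (lt_min (by norm_num) (by positivity)) (by positivity)
  have hc4 : c ≤ 4 := (min_le_left _ _).trans (min_le_left _ _)
  have hcρ : c * ρ ≤ 5 / 3 := by
    have : c ≤ 5 / (3 * ρ) := (min_le_left _ _).trans (min_le_right _ _)
    rw [le_div_iff₀ (by positivity)] at this
    linarith
  have hcN : c * (ρ ^ (2 * N - 2) * N) ≤ 1 := by
    have : c ≤ 1 / (ρ ^ (2 * N - 2) * N) := min_le_right _ _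
    rwa [le_div_iff₀ hR] at this
  have hE : 0 ≤ E := norm_nonneg _
  have hx0 := (comp_le x 0).trans hxρ
  have hx1 := (comp_le x 1).trans hxρ
  have hx2 := (comp_le x 2).trans hxρ
  have hw0 := (comp_le w 0).trans hwρ
  have hw1 := (comp_le w 1).trans hwρ
  have hw2 := (comp_le w 2).trans hwρ
  have e0 : _ ≤ E := comp_le (eta2 x - eta2 w) 0
  have e1 : _ ≤ E := comp_le (eta2 x - eta2 w) 1
  have e2 : _ ≤ E := comp_le (eta2 x - eta2 w) 2
  have hQ2 : ‖Qmap (w - x)‖ ^ 2 ≤ ‖Qmap (w - Pmap x)‖ ^ 2 := by gcongr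
  have hn : ‖x - w‖ ^ 2 = ‖x 0 - w 0‖ ^ 2 + ‖x 1 - w 1‖ ^ 2 + ‖x 2 - w 2‖ ^ 2 := by
    simp [EuclideanSpace.norm_sq_eq, Fin.sum_univ_three]
  rw [EuclideanSpace.norm_sq_eq, EuclideanSpace.norm_sq_eq, Fin.sum_univ_three,
    Fin.sum_univ_three] at hQ2
  simp only [Qmap, Pmap, eta2, mk3, PiLp.sub_apply, WithLp.equiv_symm_apply,
    Matrix.cons_val] at hQ2 e0 e1 e2
  rw [hn]
  clear_value E c
  clear hEdef hcdef hn hQ hxρ hwρ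
  generalize x 0 = x0 at *
  generalize x 1 = x1 at *
  generalize x 2 = x2 at *
  generalize w 0 = w0 at *
  generalize w 1 = w1 at *
  generalize w 2 = w2 at *
  obtain ⟨u, hu⟩ : ∃ u, u = (x0 + x1) / 2 := ⟨_, rfl⟩
  obtain ⟨v, hv⟩ : ∃ v, v = (x0 - x1) / (2 * I) := ⟨_, rfl⟩
  obtain ⟨u', hu'⟩ : ∃ u, u = (w0 + w1) / 2 := ⟨_, rfl⟩
  obtain ⟨v', hv'⟩ : ∃ v, v = (w0 - w1) / (2 * I) := ⟨_, rfl⟩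
  have hun : ‖u‖ ≤ ρ := by
    rw [hu, norm_div]
    have := norm_add_le x0 x1
    norm_num
    linarith
  have hun' : ‖u'‖ ≤ ρ := by
    rw [hu', norm_div]
    have := norm_add_le w0 w1
    norm_num
    linarith
  have X0 : x0 = u + I * v := by rw [hu, hv]; field_simp; ring
  have X1 : x1 = u - I * v := by rw [hu, hv]; field_simp; ring
  have W0 : w0 = u' + I * v' := by rw [hu', hv']; field_simp; ring
  have W1 : w1 = u' - I * v' := by rw [hu', hv']; field_simp; ring
  clear hu hv hu' hv'
  subst X0 X1 W0 W1
  have I2 : I ^ 2 = -1 := I_sq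
  have d0 : ‖u - u'‖ ≤ E := by
    convert e0 using 2; ring
  have d1 : ‖(v - v') * (x2 + w2) + (x2 - w2) * (v + v')‖ ≤ 2 * E := by
    have : (v - v') * (x2 + w2) + (x2 - w2) * (v + v') =
      2 * (x2 * (u + I * v - (u - I * v)) / (2 * I) -
        w2 * (u' + I * v' - (u' - I * v')) / (2 * I)) := by
      field_simp; ring
    rw [this, norm_mul, Complex.norm_ofNat]
    linarith
  have d2 : ‖(x2 - w2) * (x2 + w2)‖ ≤ E := by
    convert e2 using 2; ring
  have key : ‖(v - v') * (v + v')‖ ≤ ρ ^ (2 * N - 2) * N * E + 2 * ρ * E := by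
    have : (v - v') * (v + v') = (x2 ^ (2 * N) - w2 ^ (2 * N)) - (u + u') * (u - u') := by
      rw [← hx, ← hw]; linear_combination (v ^ 2 - v' ^ 2) * I2
    rw [this]
    refine (norm_sub_le _ _).trans (add_le_add ?_ ?_)
    · refine (pow_diff N ρ x2 w2 hx2 hw2).trans ?_
      gcongr
    · rw [norm_mul]
      gcongr
      linarith [norm_add_le u u']
  have q : ‖v - v'‖ ^ 2 + ‖x2 - w2‖ ^ 2 ≤ ‖v + v'‖ ^ 2 + ‖x2 + w2‖ ^ 2 := by
    have a1 : (u' + I * v' - (u + I * v) + (u' - I * v' - (u - I * v))) / 2 = u' - u := by ring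
    have a2 : (-I * (u' + I * v' - (u + I * v)) + I * (u' - I * v' - (u - I * v))) / 2
      = v' - v := by linear_combination (v - v') * I2
    have a3 : (u' + I * v' - (u - I * v) + (u' - I * v' - (u + I * v))) / 2 = u' - u := by ring
    have a4 : (-I * (u' + I * v' - (u - I * v)) + I * (u' - I * v' - (u + I * v))) / 2
      = v + v' := by linear_combination (-v - v') * I2
    have a5 : w2 - -x2 = x2 + w2 := by ring
    rw [a1, a2, a3, a4, a5, norm_sub_rev v' v, norm_sub_rev w2 x2] at hQ2
    linarith
  have r1 := mul_le_mul_of_nonneg_right hcρ hE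
  have r2 := mul_le_mul_of_nonneg_right hcN hE
  have r3 := mul_le_mul_of_nonneg_right hc4 hE
  have T := aux_ineq (v - v') (x2 - w2) (v + v') (x2 + w2) c E hc hE
    (by linarith [mul_le_mul_of_nonneg_left key hc.le])
    (by linarith [mul_le_mul_of_nonneg_left d2 hc.le])
    (by linarith [mul_le_mul_of_nonneg_left d1 hc.le]) q
  have hd : c * ‖u - u'‖ ^ 2 ≤ 10 / 3 * E := by
    have h1 : ‖u - u'‖ ≤ 2 * ρ := by linarith [norm_sub_le u u']
    have h2 : ‖u - u'‖ ^ 2 ≤ 2 * ρ * E := by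
      rw [sq]; gcongr
    have := mul_le_mul_of_nonneg_left h2 hc.le
    linarith
  have hp := parallelogram_law_with_norm ℂ (u - u') (I * (v - v'))
  have b1 : u + I * v - (u' + I * v') = (u - u') + I * (v - v') := by ring
  have b2 : u - I * v - (u' - I * v') = (u - u') - I * (v - v') := by ring
  rw [norm_mul I, norm_I, one_mul] at hp
  rw [b1, b2]
  have : 0 ≤ c * ‖x2 - w2‖ ^ 2 := by positivity
  have hp' := congrArg (fun y => c * y) hp
  have : 0 ≤ c * ‖v - v'‖ ^ 2 := by positivity
  beta_reduce at hp'
  linarith
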